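/- arXiv:1109.5430 — 2 statements merged into one kernel-verified Lean document; each statement's English description precedes it below -/
import Mathlib

section
/- Suppose the measurements are noise-free, i.e. y = Ax with w = 0, and that 1 − (d−1)ν − (2K−1)dμ_B > 0. Then for every subset S ⊆ I1 with 0 ≤ |S| ≤ K−1, the residual r = y − P_S y, where P_S is the orthogonal projection onto the column span of the blocks {A_l : l ∈ S}, satisfies max_{l ∉ I1} ‖A_l^T r‖_2 < max_{l ∈ I1} ‖A_l^T r‖_2; hence block-OMP recovers the exact block-sparsity pattern in K iterations. -/
/- Setting: a measurement matrix `A ∈ ℝ^{m×n}` with `n = L·d`, partitioned into `L` column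
blocks of size `m×d`; columns are indexed by pairs `(l, j)` (block `l`, position `j`). -/

noncomputable section

open Finset Matrix

/-- Euclidean (ℓ₂) norm of a finitely indexed real vector. -/
def e2norm {ι : Type*} [Fintype ι] (v : ι → ℝ) : ℝ := Real.sqrt (∑ i, v i ^ 2)

/-- Euclidean inner (dot) product of two real vectors. -/
def dotp {ι : Type*} [Fintype ι] (u v : ι → ℝ) : ℝ := ∑ i, u i * v i

/-- The `(l, j)` column of the block matrix `A` (block `l`, position `j` inside the block). -/
def acol {m L d : ℕ} (A : Matrix (Fin m) (Fin L × Fin d) ℝ) (l : Fin L) (j : Fin d) :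
    Fin m → ℝ :=
  fun i => A i (l, j)

/-- `A_lᵀ v` : correlation of the `l`-th block of `A` with a vector `v ∈ ℝ^m`. -/
def blkT {m L d : ℕ} (A : Matrix (Fin m) (Fin L × Fin d) ℝ) (l : Fin L) (v : Fin m → ℝ) :
    Fin d → ℝ :=
  fun j => dotp (acol A l j) v

/-- Spectral norm (largest singular value) `ρ(X)` of a real matrix, as the supremum of
`‖Xu‖₂ / ‖u‖₂` over nonzero `u`. -/
def specNorm {p q : ℕ} (X : Matrix (Fin p) (Fin q) ℝ) : ℝ :=
  ⨆ u : {u : Fin q → ℝ // u ≠ 0}, e2norm (X *ᵥ u.1) / e2norm u.1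

/-- The `d × d` cross-Gram matrix `A_iᵀ A_j` of two blocks of `A`. -/
def bgram {m L d : ℕ} (A : Matrix (Fin m) (Fin L × Fin d) ℝ) (i j : Fin L) :
    Matrix (Fin d) (Fin d) ℝ :=
  fun a b => dotp (acol A i a) (acol A j b)

/-- Block-coherence `μ_B = max_{i ≠ j} (1/d) ρ(A_iᵀ A_j)`. -/
def blockCoh {m L d : ℕ} (A : Matrix (Fin m) (Fin L × Fin d) ℝ) : ℝ :=
  ⨆ p : {p : Fin L × Fin L // p.1 ≠ p.2},
    (1 / (d : ℝ)) * specNorm (bgram A p.1.1 p.1.2)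

/-- Sub-coherence `ν`: the maximum of `|a_iᵀ a_j|` over pairs of distinct columns lying in the
same block of `A`. -/
def subCoh {m L d : ℕ} (A : Matrix (Fin m) (Fin L × Fin d) ℝ) : ℝ :=
  ⨆ t : {t : Fin L × Fin d × Fin d // t.2.1 ≠ t.2.2},
    |dotp (acol A t.1.1 t.1.2.1) (acol A t.1.1 t.1.2.2)|

/-!
Since `P_S y` is a combination of the columns in `S`, the residual is `r = A z`, where `z` is
supported on the blocks of `I1` and agrees with `x` on the nonempty set `I1 \ S`, so that `z ≠ 0`
and `A_lᵀ r = ∑_{k ∈ I1} (A_lᵀ A_k) z_k`. Let `M` be the largest block norm of `z`. Every block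
`l ∉ I1` sees only cross terms, hence `‖A_lᵀ r‖ ≤ K d μ_B M`. At a block `l ∈ I1` with `‖z_l‖ = M`
the diagonal term has norm at least `(1 - (d - 1) ν) M`, because `A_lᵀ A_l` has unit diagonal and
off-diagonal entries at most `ν` in absolute value, while the other terms cost at most
`(K - 1) d μ_B M`. The hypothesis on `ν` and `μ_B` says precisely that the second bound exceeds
the first.
-/

theorem ciSup_lt_ciSup_of_exists_forall_lt {ι κ α : Type*} [Finite ι] [Nonempty ι] [Finite κ]
    [ConditionallyCompleteLinearOrder α] {f : ι → α} {g : κ → α} (h : ∃ k, ∀ i, f i < g k) :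
    ⨆ i, f i < ⨆ k, g k := by
  obtain ⟨k, hk⟩ := h
  obtain ⟨i, hi⟩ := exists_eq_ciSup_of_finite (f := f)
  exact hi ▸ (hk i).trans_le (le_ciSup (Set.finite_range g).bddAbove k)

theorem norm_sub_card_sub_one_mul_le_norm_sum {ι E : Type*} [SeminormedAddCommGroup E]
    {I : Finset ι} {w : ι → E} {b : ℝ} {l : ι} (hl : l ∈ I) (hw : ∀ k ∈ I, k ≠ l → ‖w k‖ ≤ b) :
    ‖w l‖ - (#I - 1) * b ≤ ‖∑ k ∈ I, w k‖ := by
  classical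
  have hrest : ‖∑ k ∈ I.erase l, w k‖ ≤ (#I - 1) * b := by
    calc ‖∑ k ∈ I.erase l, w k‖
        ≤ ∑ _k ∈ I.erase l, b :=
          norm_sum_le_of_le _ fun k hk => hw k (mem_of_mem_erase hk) (ne_of_mem_erase hk)
      _ = (#I - 1) * b := by rw [sum_const, nsmul_eq_mul, cast_card_erase_of_mem hl]
  rw [← add_sum_erase I w hl]
  linarith [norm_sub_le_norm_add (w l) (∑ k ∈ I.erase l, w k)]

theorem exists_mem_forall_notMem_norm_sum_lt {ι E : Type*} [SeminormedAddCommGroup E]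
    {I : Finset ι} {w : ι → ι → E} {s : ι → ℝ} {α β : ℝ} (hβ : 0 ≤ β)
    (hdiag : ∀ k ∈ I, α * s k ≤ ‖w k k‖) (hoff : ∀ l, ∀ k ∈ I, l ≠ k → ‖w l k‖ ≤ β * s k)
    (hαβ : (2 * #I - 1) * β < α) (hs : ∃ k ∈ I, 0 < s k) :
    ∃ l ∈ I, ∀ l' ∉ I, ‖∑ k ∈ I, w l' k‖ < ‖∑ k ∈ I, w l k‖ := by
  obtain ⟨k₀, hk₀, hpos⟩ := hs
  obtain ⟨l, hl, hmax⟩ := exists_max_image I s ⟨k₀, hk₀⟩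
  have hM : 0 < s l := hpos.trans_le (hmax k₀ hk₀)
  have hcross : ∀ l', ∀ k ∈ I, l' ≠ k → ‖w l' k‖ ≤ β * s l := fun l' k hk hne =>
    (hoff l' k hk hne).trans (mul_le_mul_of_nonneg_left (hmax k hk) hβ)
  refine ⟨l, hl, fun l' hl' => ?_⟩
  calc ‖∑ k ∈ I, w l' k‖
      ≤ ∑ _k ∈ I, β * s l :=
        norm_sum_le_of_le _ fun k hk => hcross l' k hk (ne_of_mem_of_not_mem hk hl').symm
    _ = #I * (β * s l) := by rw [sum_const, nsmul_eq_mul]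
    _ < α * s l - (#I - 1) * (β * s l) := by linarith [mul_lt_mul_of_pos_right hαβ hM]
    _ ≤ ‖w l l‖ - (#I - 1) * (β * s l) := sub_le_sub_right (hdiag l hl) _
    _ ≤ ‖∑ k ∈ I, w l k‖ :=
        norm_sub_card_sub_one_mul_le_norm_sum hl fun k hk hne => hcross l k hk hne.symm

theorem mul_sum_sq_le_dotProduct_mulVec {ι : Type*} [Fintype ι] {G : Matrix ι ι ℝ} {c ν : ℝ}
    (hdiag : ∀ a, c ≤ G a a) (hoff : ∀ a b, a ≠ b → |G a b| ≤ ν) (v : ι → ℝ) :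
    (c - (Fintype.card ι - 1) * ν) * ∑ a, v a ^ 2 ≤ v ⬝ᵥ G *ᵥ v := by
  classical
  have hentry : ∀ a b, (if a = b then (c + ν) * v a ^ 2 else 0) - ν * ((v a ^ 2 + v b ^ 2) / 2)
      ≤ v a * (G a b * v b) := by
    intro a b
    split_ifs with hab
    · subst hab
      linarith [mul_le_mul_of_nonneg_right (hdiag a) (sq_nonneg (v a))]
    · have hamgm : |v a| * |v b| ≤ (v a ^ 2 + v b ^ 2) / 2 := by
        linarith [two_mul_le_add_sq |v a| |v b|, sq_abs (v a), sq_abs (v b)]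
      have habs : |v a * (G a b * v b)| ≤ ν * ((v a ^ 2 + v b ^ 2) / 2) := by
        calc |v a * (G a b * v b)| = |G a b| * (|v a| * |v b|) := by
              rw [abs_mul, abs_mul, mul_left_comm]
          _ ≤ ν * ((v a ^ 2 + v b ^ 2) / 2) :=
              mul_le_mul (hoff a b hab) hamgm (by positivity) ((abs_nonneg _).trans (hoff a b hab))
      linarith [neg_le_of_abs_le habs]
  calc (c - (Fintype.card ι - 1) * ν) * ∑ a, v a ^ 2
      = ∑ a, ∑ b, ((if a = b then (c + ν) * v a ^ 2 else 0)
          - ν * ((v a ^ 2 + v b ^ 2) / 2)) := by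
        simp only [sum_sub_distrib, sum_ite_eq, mem_univ, if_true, ← mul_sum, ← sum_div,
          sum_add_distrib, sum_const, card_univ, nsmul_eq_mul]
        ring
    _ ≤ ∑ a, ∑ b, v a * (G a b * v b) := sum_le_sum fun a _ => sum_le_sum fun b _ => hentry a b
    _ = v ⬝ᵥ G *ᵥ v := by simp only [dotProduct, mulVec, mul_sum]

theorem exists_ne_zero_mulVec_sub_sum_blocks_eq {m ι κ R : Type*} [Fintype ι] [Fintype κ]
    [NonUnitalNonAssocRing R] (A : Matrix m (ι × κ) R) {x : ι × κ → R} {I S : Finset ι}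
    (hI : ∀ l, l ∈ I ↔ ∃ j, x (l, j) ≠ 0) (hSI : S ⊂ I) (c : ι → κ → R) :
    ∃ z ≠ 0, (∀ l ∉ I, ∀ j, z (l, j) = 0) ∧
      ∀ i, (A *ᵥ x) i - ∑ l ∈ S, ∑ j, A i (l, j) * c l j = (A *ᵥ z) i := by
  classical
  obtain ⟨l₀, hl₀, hl₀S⟩ := exists_of_ssubset hSI
  obtain ⟨j₀, hj₀⟩ := (hI l₀).1 hl₀
  refine ⟨fun p => x p - if p.1 ∈ S then c p.1 p.2 else 0, fun hz => hj₀ ?_, fun l hl j => ?_,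
    fun i => ?_⟩
  · simpa [hl₀S] using congrFun hz (l₀, j₀)
  · have hx : x (l, j) = 0 := by_contra fun h => hl ((hI l).2 ⟨j, h⟩)
    have hlS : l ∉ S := fun h => hl (hSI.subset h)
    simp [hx, hlS]
  · simp only [mulVec, dotProduct, Fintype.sum_prod_type, mul_sub, sum_sub_distrib, mul_ite,
      mul_zero, sum_ite_irrel, sum_const_zero, sum_ite_mem, univ_inter]

section EuclideanNorm

variable {ι : Type*} [Fintype ι]

theorem e2norm_eq_norm (v : ι → ℝ) : e2norm v = ‖WithLp.toLp 2 v‖ := by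
  simp [e2norm, EuclideanSpace.norm_eq]

theorem e2norm_nonneg (v : ι → ℝ) : 0 ≤ e2norm v := Real.sqrt_nonneg _

theorem e2norm_pos {v : ι → ℝ} (hv : v ≠ 0) : 0 < e2norm v := by
  rwa [e2norm_eq_norm, norm_pos_iff, ne_eq, WithLp.toLp_eq_zero]

theorem e2norm_sq (v : ι → ℝ) : e2norm v ^ 2 = ∑ i, v i ^ 2 :=
  Real.sq_sqrt (sum_nonneg fun _ _ => sq_nonneg _)

theorem dotProduct_le_e2norm_mul_e2norm (u v : ι → ℝ) : u ⬝ᵥ v ≤ e2norm u * e2norm v :=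
  Real.sum_mul_le_sqrt_mul_sqrt _ _ _

theorem mul_e2norm_le_e2norm_mulVec {G : Matrix ι ι ℝ} {c ν : ℝ} (hdiag : ∀ a, c ≤ G a a)
    (hoff : ∀ a b, a ≠ b → |G a b| ≤ ν) (v : ι → ℝ) :
    (c - (Fintype.card ι - 1) * ν) * e2norm v ≤ e2norm (G *ᵥ v) := by
  obtain rfl | hv := eq_or_ne v 0
  · simp [e2norm]
  refine le_of_mul_le_mul_right ?_ (e2norm_pos hv)
  calc (c - (Fintype.card ι - 1) * ν) * e2norm v * e2norm v
      = (c - (Fintype.card ι - 1) * ν) * ∑ a, v a ^ 2 := by rw [mul_assoc, ← sq, e2norm_sq]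
    _ ≤ v ⬝ᵥ G *ᵥ v := mul_sum_sq_le_dotProduct_mulVec hdiag hoff v
    _ ≤ e2norm (G *ᵥ v) * e2norm v := by
        rw [mul_comm]
        exact dotProduct_le_e2norm_mul_e2norm _ _

end EuclideanNorm

theorem specNorm_nonneg {p q : ℕ} (X : Matrix (Fin p) (Fin q) ℝ) : 0 ≤ specNorm X :=
  Real.iSup_nonneg fun _ => div_nonneg (e2norm_nonneg _) (e2norm_nonneg _)

open scoped Matrix.Norms.L2Operator in
theorem e2norm_mulVec_le_specNorm_mul {p q : ℕ} (X : Matrix (Fin p) (Fin q) ℝ) (u : Fin q → ℝ) :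
    e2norm (X *ᵥ u) ≤ specNorm X * e2norm u := by
  obtain rfl | hu := eq_or_ne u 0
  · simp [e2norm]
  have hbdd : BddAbove (Set.range fun u : {u : Fin q → ℝ // u ≠ 0} =>
      e2norm (X *ᵥ u.1) / e2norm u.1) := by
    refine ⟨‖X‖, Set.forall_mem_range.2 fun u => (div_le_iff₀ (e2norm_pos u.2)).2 ?_⟩
    rw [e2norm_eq_norm, e2norm_eq_norm]
    exact X.l2_opNorm_mulVec (WithLp.toLp 2 u.1)
  exact (div_le_iff₀ (e2norm_pos hu)).1 (le_ciSup hbdd ⟨u, hu⟩)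

section BlockMatrix

variable {m L d : ℕ} {A : Matrix (Fin m) (Fin L × Fin d) ℝ}

theorem blockCoh_nonneg : 0 ≤ blockCoh A :=
  Real.iSup_nonneg fun _ => mul_nonneg (by positivity) (specNorm_nonneg _)

theorem specNorm_bgram_le (hd : 0 < d) {k l : Fin L} (hkl : k ≠ l) :
    specNorm (bgram A k l) ≤ d * blockCoh A := by
  have hcoh : 1 / (d : ℝ) * specNorm (bgram A k l) ≤ blockCoh A :=
    le_ciSup (f := fun p : {p : Fin L × Fin L // p.1 ≠ p.2} =>
      1 / (d : ℝ) * specNorm (bgram A p.1.1 p.1.2)) (Set.finite_range _).bddAbove ⟨(k, l), hkl⟩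
  rwa [one_div, inv_mul_le_iff₀ (Nat.cast_pos.2 hd)] at hcoh

theorem e2norm_bgram_mulVec_le {k l : Fin L} (hkl : k ≠ l) (v : Fin d → ℝ) :
    e2norm (bgram A k l *ᵥ v) ≤ d * blockCoh A * e2norm v := by
  obtain rfl | hd := d.eq_zero_or_pos
  · simp [e2norm]
  · exact (e2norm_mulVec_le_specNorm_mul _ v).trans
      (mul_le_mul_of_nonneg_right (specNorm_bgram_le hd hkl) (e2norm_nonneg v))

theorem abs_bgram_self_le_subCoh (l : Fin L) {a b : Fin d} (hab : a ≠ b) :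
    |bgram A l l a b| ≤ subCoh A :=
  le_ciSup (f := fun t : {t : Fin L × Fin d × Fin d // t.2.1 ≠ t.2.2} =>
    |dotp (acol A t.1.1 t.1.2.1) (acol A t.1.1 t.1.2.2)|) (Set.finite_range _).bddAbove
    ⟨(l, a, b), hab⟩

theorem bgram_self_diag (l : Fin L) (j : Fin d) : bgram A l l j j = e2norm (acol A l j) ^ 2 := by
  rw [e2norm_sq]
  simp only [bgram, dotp, sq]

theorem mul_e2norm_le_e2norm_bgram_mulVec (hA : ∀ l j, e2norm (acol A l j) = 1) (l : Fin L)
    (v : Fin d → ℝ) :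
    (1 - ((d : ℝ) - 1) * subCoh A) * e2norm v ≤ e2norm (bgram A l l *ᵥ v) := by
  have hdiag : ∀ a, 1 ≤ bgram A l l a a := fun a => by rw [bgram_self_diag, hA, one_pow]
  simpa only [Fintype.card_fin] using
    mul_e2norm_le_e2norm_mulVec hdiag (fun _ _ => abs_bgram_self_le_subCoh l) v

theorem blkT_mulVec (l : Fin L) (z : Fin L × Fin d → ℝ) :
    blkT A l (A *ᵥ z) = ∑ k, bgram A l k *ᵥ fun j => z (k, j) := by
  ext a
  simp only [blkT, dotp, Finset.sum_apply, mulVec, dotProduct, bgram, acol,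
    Fintype.sum_prod_type, mul_sum, sum_mul, mul_assoc]
  rw [sum_comm]
  exact sum_congr rfl fun k _ => sum_comm

theorem blkT_mulVec_of_support (l : Fin L) {z : Fin L × Fin d → ℝ} {I : Finset (Fin L)}
    (hz : ∀ k ∉ I, ∀ j, z (k, j) = 0) :
    blkT A l (A *ᵥ z) = ∑ k ∈ I, bgram A l k *ᵥ fun j => z (k, j) := by
  rw [blkT_mulVec]
  refine (sum_subset (subset_univ I) fun k _ hk => ?_).symm
  rw [show (fun j => z (k, j)) = 0 from funext (hz k hk), mulVec_zero]

theorem exists_mem_forall_notMem_e2norm_blkT_lt (hA : ∀ l j, e2norm (acol A l j) = 1)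
    {I : Finset (Fin L)} {z : Fin L × Fin d → ℝ} (hz : ∀ k ∉ I, ∀ j, z (k, j) = 0) (hz0 : z ≠ 0)
    (hcoh : 0 < 1 - ((d : ℝ) - 1) * subCoh A - (2 * #I - 1) * d * blockCoh A) :
    ∃ l ∈ I, ∀ l' ∉ I, e2norm (blkT A l' (A *ᵥ z)) < e2norm (blkT A l (A *ᵥ z)) := by
  obtain ⟨⟨k, j⟩, hkj⟩ := Function.ne_iff.1 hz0
  have hk : k ∈ I := by_contra fun hk => hkj (hz k hk j)
  have hzk : 0 < e2norm fun j => z (k, j) := e2norm_pos (Function.ne_iff.2 ⟨j, hkj⟩)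
  simp only [blkT_mulVec_of_support _ hz, e2norm_eq_norm (∑ _ ∈ _, _), WithLp.toLp_sum]
  refine exists_mem_forall_notMem_norm_sum_lt (s := fun k => e2norm fun j => z (k, j))
    (mul_nonneg d.cast_nonneg blockCoh_nonneg) (fun k _ => ?_) (fun l k _ hlk => ?_)
    (show (2 * (#I : ℝ) - 1) * (d * blockCoh A) < 1 - ((d : ℝ) - 1) * subCoh A by linarith)
    ⟨k, hk, hzk⟩
  · exact e2norm_eq_norm (bgram A k k *ᵥ _) ▸ mul_e2norm_le_e2norm_bgram_mulVec hA k _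
  · exact e2norm_eq_norm (bgram A l k *ᵥ _) ▸ e2norm_bgram_mulVec_le hlk _

theorem stmt1_general (hA : ∀ l j, e2norm (acol A l j) = 1) {I : Finset (Fin L)} (hIL : #I < L)
    {z : Fin L × Fin d → ℝ} (hz : ∀ k ∉ I, ∀ j, z (k, j) = 0) (hz0 : z ≠ 0)
    (hcoh : 0 < 1 - ((d : ℝ) - 1) * subCoh A - (2 * #I - 1) * d * blockCoh A) :
    (⨆ l : {l // l ∉ I}, e2norm (blkT A l.1 (A *ᵥ z))) <
      ⨆ l : {l // l ∈ I}, e2norm (blkT A l.1 (A *ᵥ z)) := by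
  obtain ⟨l₁, hl₁⟩ : ∃ l, l ∉ I := by
    simpa using exists_mem_notMem_of_card_lt_card (s := I) (t := univ) (by simpa using hIL)
  have : Nonempty {l // l ∉ I} := ⟨⟨l₁, hl₁⟩⟩
  obtain ⟨l, hl, hlt⟩ := exists_mem_forall_notMem_e2norm_blkT_lt hA hz hz0 hcoh
  exact ciSup_lt_ciSup_of_exists_forall_lt ⟨⟨l, hl⟩, fun l' => hlt l'.1 l'.2⟩

end BlockMatrix

/-- **Noise-free block-OMP recovery.**  If `y = Ax` (no noise) and
`1 - (d-1)ν - (2K-1)dμ_B > 0`, then for every subset `S ⊆ I1` with `|S| ≤ K-1` the residual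
`r = y - P_S y` correlates strictly better with some block inside the support `I1` than with
every block outside `I1`; hence block-OMP recovers the exact block-sparsity pattern in `K`
iterations. -/
theorem stmt1 {m L d K : ℕ}
    (hm : m < L * d) (hd : 0 < d) (hK1 : 1 ≤ K)
    (A : Matrix (Fin m) (Fin L × Fin d) ℝ)
    (hA : ∀ l j, e2norm (acol A l j) = 1)
    (μB ν : ℝ) (hμB : μB = blockCoh A) (hν : ν = subCoh A)
    (x : Fin L × Fin d → ℝ)
    (I1 : Finset (Fin L))
    (hI1 : ∀ l, l ∈ I1 ↔ ∃ j, x (l, j) ≠ 0)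
    (hcard : I1.card = K) (hKL : K < L)
    (y : Fin m → ℝ) (hy : y = A *ᵥ x)
    (hcond : 0 < 1 - ((d : ℝ) - 1) * ν - (2 * (K : ℝ) - 1) * d * μB) :
    ∀ S : Finset (Fin L), S ⊆ I1 → S.card < K →
      ∀ PSy : Fin m → ℝ,
        (∃ c : Fin L → Fin d → ℝ, ∀ i, PSy i = ∑ l ∈ S, ∑ j, A i (l, j) * c l j) →
        (∀ l ∈ S, ∀ j, dotp (acol A l j) (fun i => y i - PSy i) = 0) →
        (⨆ l : {l : Fin L // l ∉ I1}, e2norm (blkT A l.1 (fun i => y i - PSy i))) <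
          ⨆ l : {l : Fin L // l ∈ I1}, e2norm (blkT A l.1 (fun i => y i - PSy i)) := by
  rintro S hS hSK PSy ⟨c, hc⟩ -
  subst hμB hν hcard hy
  obtain ⟨z, hz0, hz, hr⟩ := exists_ne_zero_mulVec_sub_sum_blocks_eq A hI1
    (hS.ssubset_of_ne (ne_of_apply_ne card hSK.ne)) c
  simpa only [hc, hr] using stmt1_general hA hKL hz hz0 hcond
end
end

section
/- Let S ⊆ I1 with |S| = k (0 ≤ k < K), let P_S denote the orthogonal projection onto the column span of the blocks {A_l : l ∈ S}, let r̃ = (I − P_S)v with v = Σ_{l∈I1∖S} A_l x̃_l, and set r = r̃ + w̃. Assume A_nz has linearly independent columns and A_nz^T r̃ ≠ 0. Then A_nz^T r = A_nz^T r̃, and the greedy selection ratio satisfies ‖A_z^T r‖_{2,∞} / ‖A_nz^T r‖_{2,∞} ≤ ‖A_z^T (A_nz^†)^T‖_{2,∞} + ‖A_z^T w̃‖_{2,∞} / ‖A_nz^T r̃‖_{2,∞}. -/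
/- Setting: a measurement matrix `A ∈ ℝ^{m×n}` with `n = L·d`, partitioned into `L` column
blocks of size `m×d`; columns are indexed by pairs `(l, j)` (block `l`, position `j`). -/

noncomputable section

open Finset Matrix

/-- Mixed `ℓ₂/ℓ∞` norm (block size `d`) of a block-partitioned vector. -/
def bnorm2inf {σ : Type*} [Fintype σ] {d : ℕ} (z : σ × Fin d → ℝ) : ℝ :=
  ⨆ q : σ, e2norm (fun j => z (q, j))

/-- Induced mixed `ℓ₂/ℓ∞` matrix norm (block size `d`). -/
def bOpNorm {σ τ : Type*} [Fintype σ] [Fintype τ] {d : ℕ}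
    (X : Matrix (σ × Fin d) (τ × Fin d) ℝ) : ℝ :=
  ⨆ z : {z : τ × Fin d → ℝ // z ≠ 0}, bnorm2inf (X *ᵥ z.1) / bnorm2inf z.1

/-- `A_nz`: the concatenation of the blocks of `A` indexed by `I1`. -/
def Anz {m L d : ℕ} (A : Matrix (Fin m) (Fin L × Fin d) ℝ) (I1 : Finset (Fin L)) :
    Matrix (Fin m) ({l : Fin L // l ∈ I1} × Fin d) ℝ :=
  fun i c => A i (c.1.1, c.2)

/-- `A_z`: the concatenation of the blocks of `A` not indexed by `I1`. -/
def Az {m L d : ℕ} (A : Matrix (Fin m) (Fin L × Fin d) ℝ) (I1 : Finset (Fin L)) :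
    Matrix (Fin m) ({l : Fin L // l ∉ I1} × Fin d) ℝ :=
  fun i c => A i (c.1.1, c.2)

/-- Moore–Penrose pseudoinverse `X† = (XᵀX)⁻¹ Xᵀ` of a matrix with linearly independent
columns (for such matrices this closed form is the Moore–Penrose pseudoinverse). -/
def pinvc {m : ℕ} {ι : Type*} [Fintype ι] [DecidableEq ι]
    (X : Matrix (Fin m) ι ℝ) : Matrix ι (Fin m) ℝ :=
  (Xᵀ * X)⁻¹ * Xᵀ

/-!
A residual `r = r̃ + w̃` splits into a part `r̃` in the range of `N = A_nz` and a part `w̃`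
orthogonal to it. The orthogonal projection onto that range is `N N† = (N†)ᵀ Nᵀ`, so
`r̃ = (N†)ᵀ (Nᵀ r̃)`. Hence `A_zᵀ r̃` is the image of `Nᵀ r̃ = Nᵀ r` under `A_zᵀ (N†)ᵀ`, which
costs one induced norm, and `w̃` contributes the remaining term by the triangle inequality.
-/

theorem e2norm_eq_norm_toLp {ι : Type*} [Fintype ι] (v : ι → ℝ) :
    e2norm v = ‖WithLp.toLp 2 v‖ := by
  simp only [e2norm, EuclideanSpace.norm_eq, Real.norm_eq_abs, sq_abs]

theorem pi_norm_eq_ciSup {ι : Type*} {E : ι → Type*} [Fintype ι]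
    [∀ i, SeminormedAddCommGroup (E i)] (f : ∀ i, E i) : ‖f‖ = ⨆ i, ‖f i‖ := by
  rw [Pi.norm_def, sup_univ_eq_ciSup, NNReal.coe_iSup]
  rfl

section MixedNorm

variable {σ τ : Type*} [Fintype σ] [Fintype τ] {d : ℕ}

/-- Splitting a vector into its blocks, as a linear equivalence onto a product of Euclidean spaces.
The sup norm of that product is the mixed norm `bnorm2inf`, which makes the library's theory of
normed spaces available for it. -/
def blockEquiv (σ : Type*) (d : ℕ) : (σ × Fin d → ℝ) ≃ₗ[ℝ] (σ → EuclideanSpace ℝ (Fin d)) :=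
  LinearEquiv.curry ℝ ℝ σ (Fin d) ≪≫ₗ
    LinearEquiv.piCongrRight fun _ => (WithLp.linearEquiv 2 ℝ (Fin d → ℝ)).symm

theorem bnorm2inf_eq_norm_blockEquiv (z : σ × Fin d → ℝ) :
    bnorm2inf z = ‖blockEquiv σ d z‖ := by
  rw [pi_norm_eq_ciSup]
  exact iSup_congr fun q => e2norm_eq_norm_toLp fun j => z (q, j)

theorem bnorm2inf_nonneg (z : σ × Fin d → ℝ) : 0 ≤ bnorm2inf z :=
  bnorm2inf_eq_norm_blockEquiv z ▸ norm_nonneg _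

theorem bnorm2inf_add_le (z z' : σ × Fin d → ℝ) :
    bnorm2inf (z + z') ≤ bnorm2inf z + bnorm2inf z' := by
  simpa only [bnorm2inf_eq_norm_blockEquiv, map_add] using norm_add_le _ _

theorem bnorm2inf_pos_iff {z : σ × Fin d → ℝ} : 0 < bnorm2inf z ↔ z ≠ 0 := by
  rw [bnorm2inf_eq_norm_blockEquiv, norm_pos_iff, (blockEquiv σ d).map_ne_zero_iff]

theorem exists_bnorm2inf_mulVec_le (X : Matrix (σ × Fin d) (τ × Fin d) ℝ) :
    ∃ C, ∀ z, bnorm2inf (X *ᵥ z) ≤ C * bnorm2inf z := by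
  let T := ((blockEquiv τ d).arrowCongr (blockEquiv σ d) X.mulVecLin).toContinuousLinearMap
  refine ⟨‖T‖, fun z => ?_⟩
  have hT : T (blockEquiv τ d z) = blockEquiv σ d (X *ᵥ z) := by
    simp only [T, LinearMap.coe_toContinuousLinearMap', LinearEquiv.arrowCongr_apply,
      LinearEquiv.symm_apply_apply, mulVecLin_apply]
  rw [bnorm2inf_eq_norm_blockEquiv, bnorm2inf_eq_norm_blockEquiv, ← hT]
  exact T.le_opNorm _

theorem bnorm2inf_mulVec_div_le_bOpNorm (X : Matrix (σ × Fin d) (τ × Fin d) ℝ)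
    {z : τ × Fin d → ℝ} (hz : z ≠ 0) :
    bnorm2inf (X *ᵥ z) / bnorm2inf z ≤ bOpNorm X := by
  obtain ⟨C, hC⟩ := exists_bnorm2inf_mulVec_le X
  have hbdd : BddAbove (Set.range fun z : {z : τ × Fin d → ℝ // z ≠ 0} =>
      bnorm2inf (X *ᵥ z.1) / bnorm2inf z.1) := by
    refine ⟨C, ?_⟩
    rintro _ ⟨z, rfl⟩
    exact (div_le_iff₀ (bnorm2inf_pos_iff.2 z.2)).2 (hC z)
  exact le_ciSup hbdd ⟨z, hz⟩

end MixedNorm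

section Pseudoinverse

variable {m : ℕ} {ι : Type*} [Fintype ι] [DecidableEq ι] {X : Matrix (Fin m) ι ℝ}

theorem pinvc_mul_self (hX : LinearIndependent ℝ X.col) : pinvc X * X = 1 := by
  have hgram : IsUnit (Xᵀ * X) := by
    simpa only [conjTranspose_eq_transpose_of_trivial] using
      (PosDef.conjTranspose_mul_self X (mulVec_injective_iff.2 hX)).isUnit
  rw [pinvc, Matrix.mul_assoc, nonsing_inv_mul _ ((isUnit_iff_isUnit_det _).1 hgram)]

variable (X) in
theorem isSymm_mul_pinvc : (X * pinvc X).IsSymm := by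
  simp only [IsSymm, pinvc, transpose_mul, transpose_nonsing_inv, transpose_transpose,
    Matrix.mul_assoc]

theorem transpose_pinvc_mulVec_transpose_mulVec (hX : LinearIndependent ℝ X.col)
    {u : Fin m → ℝ} (hu : u ∈ LinearMap.range X.mulVecLin) :
    (pinvc X)ᵀ *ᵥ (Xᵀ *ᵥ u) = u := by
  obtain ⟨c, rfl⟩ := hu
  rw [mulVecLin_apply, mulVec_mulVec, ← transpose_mul, isSymm_mul_pinvc, mulVec_mulVec,
    Matrix.mul_assoc, pinvc_mul_self hX, Matrix.mul_one]

end Pseudoinverse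

theorem sum_blocks_mem_range_Anz {m L d : ℕ} (A : Matrix (Fin m) (Fin L × Fin d) ℝ)
    {T I1 : Finset (Fin L)} (hT : T ⊆ I1) (c : Fin L → Fin d → ℝ) :
    (fun i => ∑ l ∈ T, ∑ j, A i (l, j) * c l j) ∈ LinearMap.range (Anz A I1).mulVecLin := by
  refine ⟨fun p => if p.1.1 ∈ T then c p.1.1 p.2 else 0, funext fun i => ?_⟩
  calc ∑ p, Anz A I1 i p * (if p.1.1 ∈ T then c p.1.1 p.2 else 0)
      = ∑ l ∈ I1, ∑ j, A i (l, j) * (if l ∈ T then c l j else 0) := by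
        rw [← sum_coe_sort I1, Fintype.sum_prod_type]
        rfl
    _ = ∑ l ∈ I1, if l ∈ T then ∑ j, A i (l, j) * c l j else 0 :=
        sum_congr rfl fun l _ => by split_ifs <;> simp
    _ = ∑ l ∈ T, ∑ j, A i (l, j) * c l j := by
        rw [sum_ite_mem, inter_eq_right.2 hT]

theorem stmt4_general {m d : ℕ} {σ τ : Type*} [Fintype σ] [Fintype τ] [DecidableEq τ]
    {N : Matrix (Fin m) (τ × Fin d) ℝ} (Z : Matrix (Fin m) (σ × Fin d) ℝ)
    (hN : LinearIndependent ℝ N.col) {rt wt : Fin m → ℝ}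
    (hrt : rt ∈ LinearMap.range N.mulVecLin) (hwt : Nᵀ *ᵥ wt = 0) (hne : Nᵀ *ᵥ rt ≠ 0) :
    Nᵀ *ᵥ (rt + wt) = Nᵀ *ᵥ rt ∧
      bnorm2inf (Zᵀ *ᵥ (rt + wt)) / bnorm2inf (Nᵀ *ᵥ (rt + wt)) ≤
        bOpNorm (Zᵀ * (pinvc N)ᵀ) + bnorm2inf (Zᵀ *ᵥ wt) / bnorm2inf (Nᵀ *ᵥ rt) := by
  have hcorr : Nᵀ *ᵥ (rt + wt) = Nᵀ *ᵥ rt := by rw [mulVec_add, hwt, add_zero]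
  have hfactor : (Zᵀ * (pinvc N)ᵀ) *ᵥ (Nᵀ *ᵥ rt) = Zᵀ *ᵥ rt := by
    rw [← mulVec_mulVec, transpose_pinvc_mulVec_transpose_mulVec hN hrt]
  refine ⟨hcorr, ?_⟩
  calc bnorm2inf (Zᵀ *ᵥ (rt + wt)) / bnorm2inf (Nᵀ *ᵥ (rt + wt))
      ≤ (bnorm2inf (Zᵀ *ᵥ rt) + bnorm2inf (Zᵀ *ᵥ wt)) / bnorm2inf (Nᵀ *ᵥ rt) := by
        rw [hcorr, mulVec_add]
        exact div_le_div_of_nonneg_right (bnorm2inf_add_le _ _) (bnorm2inf_nonneg _)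
    _ = bnorm2inf ((Zᵀ * (pinvc N)ᵀ) *ᵥ (Nᵀ *ᵥ rt)) / bnorm2inf (Nᵀ *ᵥ rt) +
          bnorm2inf (Zᵀ *ᵥ wt) / bnorm2inf (Nᵀ *ᵥ rt) := by rw [add_div, hfactor]
    _ ≤ bOpNorm (Zᵀ * (pinvc N)ᵀ) + bnorm2inf (Zᵀ *ᵥ wt) / bnorm2inf (Nᵀ *ᵥ rt) := by
        gcongr
        exact bnorm2inf_mulVec_div_le_bOpNorm _ hne

/-- **Greedy-selection-ratio bound (eq. (17) of the paper).**  With `r̃ = (I - P_S)v`,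
`r = r̃ + w̃`, if `A_nz` has linearly independent columns and `A_nzᵀ r̃ ≠ 0`, then
`A_nzᵀ r = A_nzᵀ r̃` and
`‖A_zᵀ r‖₂,∞ / ‖A_nzᵀ r‖₂,∞ ≤ ‖A_zᵀ (A_nz†)ᵀ‖₂,∞ + ‖A_zᵀ w̃‖₂,∞ / ‖A_nzᵀ r̃‖₂,∞`. -/
theorem stmt4 {m L d K k : ℕ}
    (hm : m < L * d) (hd : 0 < d) (hK1 : 1 ≤ K) (hKL : K < L)
    (A : Matrix (Fin m) (Fin L × Fin d) ℝ)
    (hA : ∀ l j, e2norm (acol A l j) = 1)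
    (x : Fin L × Fin d → ℝ)
    (I1 : Finset (Fin L))
    (hI1 : ∀ l, l ∈ I1 ↔ ∃ j, x (l, j) ≠ 0)
    (hcard : I1.card = K)
    (y w : Fin m → ℝ) (hy : y = A *ᵥ x + w)
    (wt : Fin m → ℝ)
    (hwt1 : ∃ c : Fin L → Fin d → ℝ, ∀ i, w i - wt i = ∑ l ∈ I1, ∑ j, A i (l, j) * c l j)
    (hwt2 : ∀ l ∈ I1, ∀ j, dotp (acol A l j) wt = 0)
    (xt : Fin L → Fin d → ℝ)
    (hxt1 : ∀ i, (∑ l ∈ I1, ∑ j, A i (l, j) * xt l j) = y i - wt i)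
    (hxt2 : ∃ u : Fin m → ℝ, ∀ l ∈ I1, ∀ j, xt l j - x (l, j) = dotp (acol A l j) u)
    (S : Finset (Fin L)) (hS : S ⊆ I1) (hSk : S.card = k) (hk : k < K)
    (v : Fin m → ℝ) (hv : v = fun i => ∑ l ∈ I1 \ S, ∑ j, A i (l, j) * xt l j)
    (PSv : Fin m → ℝ)
    (hPSv1 : ∃ c : Fin L → Fin d → ℝ, ∀ i, PSv i = ∑ l ∈ S, ∑ j, A i (l, j) * c l j)
    (hPSv2 : ∀ l ∈ S, ∀ j, dotp (acol A l j) (fun i => v i - PSv i) = 0)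
    (rt : Fin m → ℝ) (hrt : rt = fun i => v i - PSv i)
    (r : Fin m → ℝ) (hr : r = fun i => rt i + wt i)
    (hind : LinearIndependent ℝ
      (fun c : {l : Fin L // l ∈ I1} × Fin d => fun i => Anz A I1 i c))
    (hne : (Anz A I1)ᵀ *ᵥ rt ≠ 0) :
    ((Anz A I1)ᵀ *ᵥ r = (Anz A I1)ᵀ *ᵥ rt) ∧
      bnorm2inf ((Az A I1)ᵀ *ᵥ r) / bnorm2inf ((Anz A I1)ᵀ *ᵥ r) ≤
        bOpNorm ((Az A I1)ᵀ * (pinvc (Anz A I1))ᵀ) +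
          bnorm2inf ((Az A I1)ᵀ *ᵥ wt) / bnorm2inf ((Anz A I1)ᵀ *ᵥ rt) := by
  obtain ⟨c, hc⟩ := hPSv1
  obtain rfl := funext hc
  subst hv hrt hr
  exact stmt4_general _ hind (sub_mem (sum_blocks_mem_range_Anz A sdiff_subset xt)
    (sum_blocks_mem_range_Anz A hS c)) (funext fun p => hwt2 p.1 p.1.2 p.2) hne
end
end
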